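/- arXiv:2212.13759 — 4 statements merged into one kernel-verified Lean document; each statement's English description precedes it below -/
import Mathlib

section
/- Let d ≥ 1, let A ⊆ ℝ^d be open, and let (u_k) be a sequence in L¹(A) converging to u strongly in L¹(A). Let A' ⊆ ℝ^d be open and bounded with compact closure contained in A, and let (ε_k) be positive reals with ε_k → 0. Define w_k(x,y) := u_k(x + ε_k y) for x ∈ A' and y ∈ Q'. Then for all sufficiently large k the function w_k is well defined on A' × Q' (i.e. x + ε_k y ∈ A for all x ∈ A', y ∈ Q'), and ∫_{A' × Q'} |w_k(x,y) − u(x)| dx dy → 0 as k → ∞, i.e. w_k converges in L¹(A' × Q') to the function (x,y) ↦ u(x). -/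
open MeasureTheory Filter Topology

/-- The open unit cube in `ℝ^d` centred at the origin. -/
def unitCube (d : ℕ) : Set (Fin d → ℝ) := {y | ∀ i, |y i| < 1 / 2}

lemma unitCube_eq (d : ℕ) :
    unitCube d = Set.pi Set.univ (fun _ : Fin d => Set.Ioo (-(1 / 2) : ℝ) (1 / 2)) := by
  ext y
  simp [unitCube, abs_lt]

lemma unitCube_volume (d : ℕ) : volume (unitCube d) = 1 := by
  rw [unitCube_eq, volume_pi_pi]
  simp only [Real.volume_Ioo]
  norm_num

lemma unitCube_meas (d : ℕ) : MeasurableSet (unitCube d) := by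
  rw [unitCube_eq]
  exact MeasurableSet.univ_pi fun _ => measurableSet_Ioo

lemma unitCube_norm {d : ℕ} {y : Fin d → ℝ} (hy : y ∈ unitCube d) : ‖y‖ ≤ 1 := by
  refine (pi_norm_le_iff_of_nonneg zero_le_one).2 fun i => ?_
  have := hy i
  rw [Real.norm_eq_abs]
  linarith

lemma map_shift (d : ℕ) (e : ℝ) :
    Measure.map (fun p : (Fin d → ℝ) × (Fin d → ℝ) => p.1 + e • p.2)
      ((volume : Measure (Fin d → ℝ)).prod (volume.restrict (unitCube d))) = volume := by
  have hT : Measurable (fun p : (Fin d → ℝ) × (Fin d → ℝ) => p.1 + e • p.2) := by fun_prop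
  ext s hs
  rw [Measure.map_apply hT hs, Measure.prod_apply_symm (hT hs)]
  have : ∀ y : Fin d → ℝ, volume ((fun x : Fin d → ℝ => (x, y)) ⁻¹'
      ((fun p : (Fin d → ℝ) × (Fin d → ℝ) => p.1 + e • p.2) ⁻¹' s)) = volume s := by
    intro y
    exact measure_preimage_add_right volume (e • y) s
  simp [this, unitCube_volume]

lemma shift_aemeasurable {d : ℕ} (e : ℝ) {F : (Fin d → ℝ) → ENNReal} (hF : AEMeasurable F) :
    AEMeasurable (fun p : (Fin d → ℝ) × (Fin d → ℝ) => F (p.1 + e • p.2))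
      ((volume : Measure (Fin d → ℝ)).prod (volume.restrict (unitCube d))) := by
  have hT : Measurable (fun p : (Fin d → ℝ) × (Fin d → ℝ) => p.1 + e • p.2) := by fun_prop
  rw [← map_shift d e] at hF
  exact hF.comp_measurable hT

lemma shift_lintegral {d : ℕ} (e : ℝ) {F : (Fin d → ℝ) → ENNReal} (hF : AEMeasurable F) :
    ∫⁻ p : (Fin d → ℝ) × (Fin d → ℝ), F (p.1 + e • p.2)
      ∂((volume : Measure (Fin d → ℝ)).prod (volume.restrict (unitCube d))) = ∫⁻ x, F x := by
  have hT : Measurable (fun p : (Fin d → ℝ) × (Fin d → ℝ) => p.1 + e • p.2) := by fun_prop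
  have h := hF
  rw [← map_shift d e] at h
  rw [← lintegral_map' h hT.aemeasurable, map_shift]

theorem statement2
    (d : ℕ) (hd : 1 ≤ d)
    (A : Set (Fin d → ℝ)) (hA_open : IsOpen A)
    (u : ℕ → (Fin d → ℝ) → ℝ) (ulim : (Fin d → ℝ) → ℝ)
    (hu_int : ∀ k, IntegrableOn (u k) A)
    (hulim_int : IntegrableOn ulim A)
    (hconv : Tendsto (fun k => ∫ x in A, |u k x - ulim x|) atTop (𝓝 0))
    (A' : Set (Fin d → ℝ)) (hA'_open : IsOpen A') (hA'_bdd : Bornology.IsBounded A')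
    (hA'_cpt : IsCompact (closure A')) (hA'_sub : closure A' ⊆ A)
    (ε : ℕ → ℝ) (hε_pos : ∀ k, 0 < ε k) (hε_lim : Tendsto ε atTop (𝓝 0)) :
    (∀ᶠ k in atTop, ∀ x ∈ A', ∀ y ∈ unitCube d, x + ε k • y ∈ A) ∧
    Tendsto
      (fun k => ∫ p in A' ×ˢ unitCube d, |u k (p.1 + ε k • p.2) - ulim p.1|)
      atTop (𝓝 0) := by
  have hdist : ∀ r > 0, ∀ᶠ k in atTop, ∀ x : Fin d → ℝ, ∀ y ∈ unitCube d,
      dist (x + ε k • y) x < r := by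
    intro r hr
    filter_upwards [hε_lim.eventually_lt_const hr] with k hk x y hy
    rw [dist_eq_norm, add_sub_cancel_left, norm_smul, Real.norm_eq_abs, abs_of_pos (hε_pos k)]
    have := mul_le_mul_of_nonneg_left (unitCube_norm hy) (hε_pos k).le
    linarith
  have h1 : ∀ᶠ k in atTop, ∀ x ∈ A', ∀ y ∈ unitCube d, x + ε k • y ∈ A := by
    obtain ⟨r, hr, hsub⟩ := hA'_cpt.exists_thickening_subset_open hA_open hA'_sub
    filter_upwards [hdist r hr] with k hk x hx y hy
    exact hsub (Metric.mem_thickening_iff.2 ⟨x, subset_closure hx, hk x y hy⟩)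
  refine ⟨h1, ?_⟩
  have hAm := hA_open.measurableSet
  set v : (Fin d → ℝ) → ℝ := A.indicator ulim with hv
  have hvint : Integrable v := (integrable_indicator_iff hAm).2 hulim_int
  have hvk : ∀ k, Integrable (A.indicator (u k)) := fun k =>
    (integrable_indicator_iff hAm).2 (hu_int k)
  have hW : ∀ k, ∫⁻ x, ‖A.indicator (u k) x - v x‖ₑ
      = ENNReal.ofReal (∫ x in A, |u k x - ulim x|) := by
    intro k
    have := ofReal_integral_norm_eq_lintegral_enorm ((hu_int k).sub hulim_int)
    simp only [Real.norm_eq_abs, Pi.sub_apply] at this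
    rw [this, ← lintegral_indicator hAm]
    congr 1
    ext x
    by_cases hx : x ∈ A <;> simp [hv, hx]
  have hvolA' : volume A' ≠ ⊤ := hA'_bdd.measure_lt_top.ne
  set C : ℝ := 3 + (volume A').toReal with hC
  have hCpos : 0 < C := by positivity
  rw [Metric.tendsto_nhds]
  intro η hη
  set δ : ℝ := η / (2 * C) with hδ
  have hδpos : 0 < δ := by positivity
  obtain ⟨g, hgc, hgv, hgcont, hgint⟩ :=
    hvint.exists_hasCompactSupport_lintegral_sub_le
      (ε := ENNReal.ofReal δ) (by simpa using hδpos)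
  have hguc : UniformContinuous g := hgcont.uniformContinuous_of_tendsto_cocompact hgc.is_zero_at_infty
  obtain ⟨r, hr, hgr⟩ := Metric.uniformContinuous_iff.1 hguc δ hδpos
  filter_upwards [h1, hdist r hr, hconv.eventually_lt_const hδpos] with k hk1 hk2 hk3
  set M := ((volume : Measure (Fin d → ℝ)).prod (volume.restrict (unitCube d))) with hM
  set P := (volume : Measure ((Fin d → ℝ) × (Fin d → ℝ))).restrict (A' ×ˢ unitCube d) with hP
  have hPeq : P = M.restrict (A' ×ˢ Set.univ) := by
    rw [hP, hM, Measure.volume_eq_prod, ← Measure.prod_restrict, ← Measure.prod_restrict,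
      Measure.restrict_univ]
  have hPM : P ≤ M := hPeq ▸ Measure.restrict_le_self
  have hPuniv : P Set.univ = volume A' := by
    rw [hP, Measure.restrict_apply_univ, Measure.volume_eq_prod, Measure.prod_prod,
      unitCube_volume, mul_one]
  have hm1 : AEMeasurable (fun x => ‖A.indicator (u k) x - v x‖ₑ) :=
    ((hvk k).sub hvint).1.enorm
  have hm2 : AEMeasurable (fun x => ‖v x - g x‖ₑ) := (hvint.sub hgint).1.enorm
  have key : ‖∫ p in A' ×ˢ unitCube d, |u k (p.1 + ε k • p.2) - ulim p.1|‖ₑ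
      ≤ ENNReal.ofReal (δ * C) := by
    calc _ ≤ ∫⁻ p, ‖|u k (p.1 + ε k • p.2) - ulim p.1|‖ₑ ∂P :=
          enorm_integral_le_lintegral_enorm _
      _ ≤ ∫⁻ p, (‖A.indicator (u k) (p.1 + ε k • p.2) - v (p.1 + ε k • p.2)‖ₑ
            + (‖v (p.1 + ε k • p.2) - g (p.1 + ε k • p.2)‖ₑ
            + (‖v (p.1 + (0:ℝ) • p.2) - g (p.1 + (0:ℝ) • p.2)‖ₑ + ENNReal.ofReal δ))) ∂P := by
          refine setLIntegral_mono' (hA'_open.measurableSet.prod (unitCube_meas d)) ?_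
          rintro ⟨x, y⟩ ⟨hx, hy⟩
          simp only at hx hy ⊢
          have hxA : x ∈ A := hA'_sub (subset_closure hx)
          have hzA := hk1 x hx y hy
          have hg := hgr (hk2 x y hy)
          rw [Real.dist_eq] at hg
          simp only [zero_smul, add_zero, hv, Set.indicator_of_mem hxA,
            Set.indicator_of_mem hzA, Real.enorm_eq_ofReal_abs, abs_abs]
          rw [← ENNReal.ofReal_add (by positivity) (by positivity),
            ← ENNReal.ofReal_add (by positivity) (by positivity),
            ← ENNReal.ofReal_add (by positivity) (by positivity)]
          apply ENNReal.ofReal_le_ofReal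
          set z := x + ε k • y
          have e1 : u k z - ulim x = (u k z - ulim z) + ((ulim z - g z)
            + (-(ulim x - g x) + (g z - g x))) := by ring
          rw [e1]
          have a1 := abs_add_le (u k z - ulim z) ((ulim z - g z)
            + (-(ulim x - g x) + (g z - g x)))
          have a2 := abs_add_le (ulim z - g z) (-(ulim x - g x) + (g z - g x))
          have a3 := abs_add_le (-(ulim x - g x)) (g z - g x)
          rw [abs_neg] at a3
          linarith
      _ = (∫⁻ p, ‖A.indicator (u k) (p.1 + ε k • p.2) - v (p.1 + ε k • p.2)‖ₑ ∂P)
            + ((∫⁻ p, ‖v (p.1 + ε k • p.2) - g (p.1 + ε k • p.2)‖ₑ ∂P)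
            + ((∫⁻ p, ‖v (p.1 + (0:ℝ) • p.2) - g (p.1 + (0:ℝ) • p.2)‖ₑ ∂P)
              + ENNReal.ofReal δ * volume A')) := by
          rw [lintegral_add_left' ((shift_aemeasurable (ε k) hm1).mono_measure hPM),
            lintegral_add_left' ((shift_aemeasurable (ε k) hm2).mono_measure hPM),
            lintegral_add_left' ((shift_aemeasurable 0 hm2).mono_measure hPM),
            lintegral_const, hPuniv]
      _ ≤ ENNReal.ofReal δ + (ENNReal.ofReal δ + (ENNReal.ofReal δ
            + ENNReal.ofReal δ * volume A')) := by
          gcongr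
          · refine (lintegral_mono' hPM le_rfl).trans ?_
            rw [shift_lintegral (ε k) hm1, hW k]
            exact ENNReal.ofReal_le_ofReal hk3.le
          · refine (lintegral_mono' hPM le_rfl).trans ?_
            rw [shift_lintegral (ε k) hm2]
            exact hgv
          · refine (lintegral_mono' hPM le_rfl).trans ?_
            rw [shift_lintegral 0 hm2]
            exact hgv
      _ = ENNReal.ofReal (δ * C) := by
          rw [← ENNReal.ofReal_toReal hvolA', ← ENNReal.ofReal_mul hδpos.le,
            ← ENNReal.ofReal_add (by positivity) (by positivity),
            ← ENNReal.ofReal_add (by positivity) (by positivity),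
            ← ENNReal.ofReal_add (by positivity) (by positivity), hC]
          congr 1
          ring
  rw [Real.enorm_eq_ofReal_abs, ENNReal.ofReal_le_ofReal_iff (by positivity)] at key
  rw [Real.dist_eq, sub_zero]
  have : δ * C = η / 2 := by rw [hδ]; field_simp
  linarith
end

section
/- Let d ≥ 1, let A ⊆ ℝ^d be open, and let (u_k) be a sequence of measurable functions on A converging to a measurable function u in measure on A. Let A' ⊆ ℝ^d be open and bounded with compact closure contained in A, and let (ε_k) be positive reals with ε_k → 0. Define w_k(x,y) := u_k(x + ε_k y) for x ∈ A' and y ∈ Q'. Then for all sufficiently large k the function w_k is well defined on A' × Q', and w_k converges in measure on A' × Q' to the function (x,y) ↦ u(x). -/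
open MeasureTheory Filter Topology

lemma unitCube_eq_s3 (d : ℕ) : unitCube d = Metric.ball (0 : Fin d → ℝ) (1 / 2) := by
  ext y
  rw [mem_ball_zero_iff, pi_norm_lt_iff (by norm_num)]
  simp [unitCube, Real.norm_eq_abs]

lemma section_bound (d : ℕ) (F : Set (Fin d → ℝ)) (hF : MeasurableSet F) (e : ℝ) :
    volume {p : (Fin d → ℝ) × (Fin d → ℝ) | p.1 + e • p.2 ∈ F ∧ p.2 ∈ unitCube d}
      ≤ volume F := by
  have hQ : MeasurableSet (unitCube d) := by
    rw [unitCube_eq_s3]; exact measurableSet_ball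
  have hm : MeasurableSet
      {p : (Fin d → ℝ) × (Fin d → ℝ) | p.1 + e • p.2 ∈ F ∧ p.2 ∈ unitCube d} := by
    apply MeasurableSet.inter
    · exact (by fun_prop : Measurable
        (fun p : (Fin d → ℝ) × (Fin d → ℝ) => p.1 + e • p.2)) hF
    · exact measurable_snd hQ
  rw [Measure.volume_eq_prod, Measure.prod_apply_symm hm]
  calc _ ≤ ∫⁻ y, (unitCube d).indicator (fun _ => volume F) y := by
        apply lintegral_mono
        intro y
        by_cases hy : y ∈ unitCube d
        · simp only [Set.indicator_of_mem hy]
          have : ((fun x : Fin d → ℝ => (x, y)) ⁻¹'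
              {p | p.1 + e • p.2 ∈ F ∧ p.2 ∈ unitCube d}) = (fun x => x + e • y) ⁻¹' F := by
            ext x; simp [hy]
          rw [this, measure_preimage_add_right]
        · simp [hy]
    _ = volume F := by
        rw [lintegral_indicator hQ]; simp [unitCube_volume]

lemma approx (d : ℕ) (B : Set (Fin d → ℝ)) (hB : MeasurableSet B) (hBf : volume B ≠ ⊤)
    (f : (Fin d → ℝ) → ℝ) (hf : Measurable f) (δ : ℝ) (hδ : 0 < δ) (η : ENNReal) (hη : η ≠ 0)
    (hη' : η ≠ ⊤) :
    ∃ g : (Fin d → ℝ) → ℝ, Continuous g ∧ HasCompactSupport g ∧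
      volume {x | x ∈ B ∧ δ < |f x - g x|} ≤ η := by
  have hη2 : η / 2 ≠ 0 := (ENNReal.half_pos hη).ne'
  have hmeas : ∀ n : ℕ, MeasurableSet {x | x ∈ B ∧ (n : ℝ) < |f x|} := fun n =>
    hB.inter (measurableSet_lt measurable_const hf.abs)
  have ht : Tendsto (fun n : ℕ => volume {x | x ∈ B ∧ (n : ℝ) < |f x|}) atTop (𝓝 0) := by
    have := tendsto_measure_iInter_atTop (μ := (volume : Measure (Fin d → ℝ)))
      (s := fun n : ℕ => {x | x ∈ B ∧ (n : ℝ) < |f x|})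
      (fun n => (hmeas n).nullMeasurableSet)
      (by
        intro m n hmn x hx
        exact ⟨hx.1, lt_of_le_of_lt (by exact_mod_cast hmn) hx.2⟩)
      ⟨0, ne_top_of_le_ne_top hBf (measure_mono fun x hx => hx.1)⟩
    have he : (⋂ n : ℕ, {x | x ∈ B ∧ (n : ℝ) < |f x|}) = ∅ := by
      ext x
      simp only [Set.mem_iInter, Set.mem_setOf_eq, Set.mem_empty_iff_false, iff_false, not_forall]
      obtain ⟨n, hn⟩ := exists_nat_ge |f x|
      exact ⟨n, fun h => absurd h.2 (not_lt.2 hn)⟩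
    rwa [he, measure_empty] at this
  obtain ⟨n, hn⟩ := ((ENNReal.tendsto_nhds_zero.1 ht) (η / 2) (pos_iff_ne_zero.2 hη2)).exists
  set G : Set (Fin d → ℝ) := B ∩ {x | |f x| ≤ n} with hG
  have hGm : MeasurableSet G := hB.inter (measurableSet_le hf.abs measurable_const)
  have hGf : volume G ≠ ⊤ := ne_top_of_le_ne_top hBf (measure_mono Set.inter_subset_left)
  have hint : Integrable (G.indicator f) := by
    rw [integrable_indicator_iff hGm]
    apply Measure.integrableOn_of_bounded (M := (n : ℝ)) hGf hf.aestronglyMeasurable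
    exact (ae_restrict_iff' hGm).2 (Eventually.of_forall fun x hx => hx.2)
  have hδ0 : ENNReal.ofReal δ ≠ 0 := (ENNReal.ofReal_pos.2 hδ).ne'
  obtain ⟨g, hgs, hgi, hgc, -⟩ := hint.exists_hasCompactSupport_lintegral_sub_le
    (ε := ENNReal.ofReal δ * (η / 2)) (mul_ne_zero hδ0 hη2)
  refine ⟨g, hgc, hgs, ?_⟩
  have hmk := mul_meas_ge_le_lintegral₀ (μ := (volume : Measure (Fin d → ℝ)))
    (f := fun x => ‖G.indicator f x - g x‖ₑ)
    (((hf.indicator hGm).sub hgc.measurable).enorm.aemeasurable) (ENNReal.ofReal δ)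
  have hmk2 : volume {x | ENNReal.ofReal δ ≤ ‖G.indicator f x - g x‖ₑ} ≤ η / 2 :=
    (ENNReal.mul_le_mul_iff_right hδ0 ENNReal.ofReal_ne_top).1 (hmk.trans hgi)
  calc _ ≤ volume ({x | x ∈ B ∧ (n : ℝ) < |f x|} ∪
        {x | ENNReal.ofReal δ ≤ ‖G.indicator f x - g x‖ₑ}) := by
        apply measure_mono
        rintro x ⟨hxB, hx⟩
        by_cases hxn : |f x| ≤ n
        · right
          have : x ∈ G := ⟨hxB, hxn⟩
          simp only [Set.mem_setOf_eq, Set.indicator_of_mem this, Real.enorm_eq_ofReal_abs]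
          exact ENNReal.ofReal_le_ofReal hx.le
        · left
          exact ⟨hxB, not_le.1 hxn⟩
    _ ≤ η / 2 + η / 2 := (measure_union_le _ _).trans (add_le_add hn hmk2)
    _ = η := ENNReal.add_halves η

theorem statement3
    (d : ℕ) (hd : 1 ≤ d)
    (A : Set (Fin d → ℝ)) (hA_open : IsOpen A)
    (u : ℕ → (Fin d → ℝ) → ℝ) (ulim : (Fin d → ℝ) → ℝ)
    (hu_meas : ∀ k, Measurable (u k)) (hulim_meas : Measurable ulim)
    (hconv : ∀ δ > (0:ℝ),
      Tendsto (fun k => volume {x | x ∈ A ∧ δ < |u k x - ulim x|}) atTop (𝓝 0))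
    (A' : Set (Fin d → ℝ)) (hA'_open : IsOpen A') (hA'_bdd : Bornology.IsBounded A')
    (hA'_cpt : IsCompact (closure A')) (hA'_sub : closure A' ⊆ A)
    (ε : ℕ → ℝ) (hε_pos : ∀ k, 0 < ε k) (hε_lim : Tendsto ε atTop (𝓝 0)) :
    (∀ᶠ k in atTop, ∀ x ∈ A', ∀ y ∈ unitCube d, x + ε k • y ∈ A) ∧
    ∀ δ > (0:ℝ),
      Tendsto
        (fun k => volume {p : (Fin d → ℝ) × (Fin d → ℝ) |
          p ∈ A' ×ˢ unitCube d ∧ δ < |u k (p.1 + ε k • p.2) - ulim p.1|})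
        atTop (𝓝 0) := by
  obtain ⟨r, hr, hrA⟩ := hA'_cpt.exists_cthickening_subset_open hA_open hA'_sub
  set B := Metric.cthickening r (closure A') with hBdef
  have hBc : IsCompact B := hA'_cpt.cthickening
  have hA'B : A' ⊆ B := subset_closure.trans (Metric.self_subset_cthickening _)
  have hdist : ∀ s > (0 : ℝ), ∀ᶠ k in atTop, ∀ x : Fin d → ℝ, ∀ y ∈ unitCube d,
      dist (x + ε k • y) x < s := by
    intro s hs
    filter_upwards [hε_lim.eventually (gt_mem_nhds hs)] with k hk x y hy
    rw [unitCube_eq_s3, mem_ball_zero_iff] at hy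
    rw [dist_eq_norm, add_sub_cancel_left, norm_smul, Real.norm_of_nonneg (hε_pos k).le]
    nlinarith [hε_pos k, norm_nonneg y]
  have hB : ∀ᶠ k in atTop, ∀ x ∈ A', ∀ y ∈ unitCube d, x + ε k • y ∈ B := by
    filter_upwards [hdist r hr] with k hk x hx y hy
    exact Metric.mem_cthickening_of_dist_le _ x _ _ (subset_closure hx) (hk x y hy).le
  refine ⟨hB.mono fun k hk x hx y hy => hrA (hk x hx y hy), ?_⟩
  intro δ hδ
  rw [ENNReal.tendsto_nhds_zero]
  intro e he
  by_cases hetop : e = ⊤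
  · simp [hetop]
  have he3 : e / 3 ≠ 0 := (ENNReal.div_pos he.ne' (by simp)).ne'
  have he3t : e / 3 ≠ ⊤ := ENNReal.div_ne_top hetop (by simp)
  obtain ⟨g, hgc, hgs, hg⟩ := approx d B hBc.measurableSet hBc.measure_lt_top.ne ulim hulim_meas
    (δ / 4) (by positivity) (e / 3) he3 he3t
  have huc := hgs.uniformContinuous_of_continuous hgc
  obtain ⟨s, hs, hgs'⟩ := Metric.uniformContinuous_iff.1 huc (δ / 4) (by positivity)
  filter_upwards [hB, hdist s hs,
    (ENNReal.tendsto_nhds_zero.1 (hconv (δ / 4) (by positivity))) (e / 3)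
      (pos_iff_ne_zero.2 he3)] with k hk1 hk2 hk3
  set F : Set (Fin d → ℝ) := {x | x ∈ A ∧ δ / 4 < |u k x - ulim x|} with hF
  set E : Set (Fin d → ℝ) := {x | x ∈ B ∧ δ / 4 < |ulim x - g x|} with hE
  have hFm : MeasurableSet F := hA_open.measurableSet.inter
    (measurableSet_lt measurable_const (((hu_meas k).sub hulim_meas).abs))
  have hEm : MeasurableSet E := hBc.measurableSet.inter
    (measurableSet_lt measurable_const ((hulim_meas.sub hgc.measurable).abs))
  have b1 := (section_bound d F hFm (ε k)).trans hk3
  have b2 := (section_bound d E hEm (ε k)).trans hg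
  have b3 := (section_bound d E hEm 0).trans hg
  refine le_trans (measure_mono ?_) ((measure_union_le _ _).trans
    (add_le_add ((measure_union_le _ _).trans (add_le_add b1 b2)) b3)) |>.trans
    (ENNReal.add_thirds e).le
  rintro ⟨x, y⟩ ⟨⟨hx, hy⟩, hxy⟩
  simp only at hx hy hxy
  by_contra hcon
  simp only [Set.mem_union, Set.mem_setOf_eq, not_or, hy, and_true, hF, hE, zero_smul, add_zero,
    hk1 x hx y hy, hrA (hk1 x hx y hy), hA'B hx, true_and, not_lt] at hcon
  obtain ⟨⟨h1, h2⟩, h3⟩ := hcon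
  have h4 := hgs' (hk2 x y hy)
  rw [Real.dist_eq] at h4
  have h5 := abs_le.1 h1
  have h6 := abs_le.1 h2
  have h7 := abs_le.1 h3
  have h8 := abs_lt.1 h4
  refine absurd hxy (not_lt.2 (abs_le.2 ⟨?_, ?_⟩)) <;> linarith
end

section
/- Let f : [0,∞) → [0,∞) be a lower semicontinuous nondecreasing function such that lim_{t→0⁺} f(t)/t = α and lim_{t→+∞} f(t) = β, where α, β ∈ (0,∞). Then there exist sequences (α_i)_{i∈ℕ} and (β_i)_{i∈ℕ} of strictly positive real numbers with sup_i α_i = α and sup_i β_i = β such that f(t) ≥ min(α_i t, β_i) for every i ∈ ℕ and every t ≥ 0. -/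
open Filter Topology

theorem statement5
    (f : ℝ → ℝ) (α β : ℝ) (hα : 0 < α) (hβ : 0 < β)
    (hf_nonneg : ∀ t, 0 ≤ t → 0 ≤ f t)
    (hf_mono : MonotoneOn f (Set.Ici 0))
    (hf_lsc : LowerSemicontinuousOn f (Set.Ici 0))
    (hf_zero : Tendsto (fun t => f t / t) (𝓝[>] 0) (𝓝 α))
    (hf_infty : Tendsto f atTop (𝓝 β)) :
    ∃ a b : ℕ → ℝ, (∀ i, 0 < a i) ∧ (∀ i, 0 < b i) ∧
      (⨆ i, a i) = α ∧ (⨆ i, b i) = β ∧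
      ∀ i, ∀ t, 0 ≤ t → min (a i * t) (b i) ≤ f t := by
  -- near zero, `f` dominates every line of slope below `α`
  have key : ∀ a, 0 < a → a < α → ∃ d, 0 < d ∧ (∀ t, 0 ≤ t → t ≤ d → a * t ≤ f t) ∧
      ∀ t, d ≤ t → a * d ≤ f t := by
    intro a ha haα
    have h := hf_zero.eventually (lt_mem_nhds haα)
    rw [eventually_nhdsWithin_iff, Metric.eventually_nhds_iff] at h
    obtain ⟨ε, hε, h⟩ := h
    have h1 : ∀ t, 0 ≤ t → t ≤ ε / 2 → a * t ≤ f t := by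
      intro t ht hte
      rcases ht.eq_or_lt with rfl | ht'
      · simpa using hf_nonneg 0 le_rfl
      · have h2 := h (y := t) (by rw [Real.dist_eq, sub_zero, abs_of_pos ht']; linarith) ht'
        exact ((lt_div_iff₀ ht').1 h2).le
    refine ⟨ε / 2, by positivity, h1, fun t ht => ?_⟩
    exact (h1 _ (by positivity) le_rfl).trans
      (hf_mono (Set.mem_Ici.2 (by positivity)) (Set.mem_Ici.2 (by linarith)) ht)
  have hA : ∀ a, 0 < a → a < α → ∃ b, 0 < b ∧ b < β ∧
      ∀ t, 0 ≤ t → min (a * t) b ≤ f t := by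
    intro a ha haα
    obtain ⟨d, hd, h1, h2⟩ := key a ha haα
    refine ⟨min (a * d) (β / 2), by positivity,
      (min_le_right _ _).trans_lt (by linarith), fun t ht => ?_⟩
    rcases le_total t d with h | h
    · exact (min_le_left _ _).trans (h1 t ht h)
    · exact (min_le_right _ _).trans ((min_le_left _ _).trans (h2 t h))
  have hB : ∀ b, 0 < b → b < β → ∃ a, 0 < a ∧ a < α ∧
      ∀ t, 0 ≤ t → min (a * t) b ≤ f t := by
    intro b hb hbβ
    obtain ⟨d, hd, h1, h2⟩ := key (α / 2) (by positivity) (by linarith)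
    obtain ⟨T, hT⟩ := eventually_atTop.1 (hf_infty.eventually (lt_mem_nhds hbβ))
    have hS : 0 < max T 1 := lt_max_of_lt_right one_pos
    refine ⟨min (α / 2) (α / 2 * d / max T 1), by positivity,
      (min_le_left _ _).trans_lt (by linarith), fun t ht => ?_⟩
    rcases le_total t d with h | h
    · exact (min_le_left _ _).trans
        ((mul_le_mul_of_nonneg_right (min_le_left _ _) ht).trans (h1 t ht h))
    rcases le_total t (max T 1) with h' | h'
    · refine (min_le_left _ _).trans (le_trans ?_ (h2 t h))
      calc _ ≤ (α / 2 * d / max T 1) * max T 1 :=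
            mul_le_mul (min_le_right _ _) h' ht (by positivity)
        _ = α / 2 * d := div_mul_cancel₀ _ hS.ne'
    · exact (min_le_right _ _).trans (hT t ((le_max_left _ _).trans h')).le
  obtain ⟨u, -, hu, hulim⟩ := exists_seq_strictMono_tendsto' hα
  obtain ⟨v, -, hv, hvlim⟩ := exists_seq_strictMono_tendsto' hβ
  choose p hp0 hp1 hp using fun n => hA (u n) (hu n).1 (hu n).2
  choose q hq0 hq1 hq using fun n => hB (v n) (hv n).1 (hv n).2
  let e := Equiv.natSumNatEquivNat
  have H : ∀ s : ℕ ⊕ ℕ, 0 < Sum.elim u q s ∧ Sum.elim u q s < α ∧ 0 < Sum.elim p v s ∧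
      Sum.elim p v s < β ∧ ∀ t, 0 ≤ t → min (Sum.elim u q s * t) (Sum.elim p v s) ≤ f t := by
    rintro (n | n)
    · exact ⟨(hu n).1, (hu n).2, hp0 n, hp1 n, hp n⟩
    · exact ⟨hq0 n, hq1 n, (hv n).1, (hv n).2, hq n⟩
  refine ⟨fun i => Sum.elim u q (e.symm i), fun i => Sum.elim p v (e.symm i),
    fun i => (H _).1, fun i => (H _).2.2.1, ?_, ?_, fun i => (H _).2.2.2.2⟩
  · refine ciSup_eq_of_forall_le_of_forall_lt_exists_gt (fun i => (H _).2.1.le) fun w hw => ?_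
    obtain ⟨n, hn⟩ := (hulim.eventually (lt_mem_nhds hw)).exists
    exact ⟨e (Sum.inl n), by simpa using hn⟩
  · refine ciSup_eq_of_forall_le_of_forall_lt_exists_gt (fun i => (H _).2.2.2.1.le) fun w hw => ?_
    obtain ⟨n, hn⟩ := (hvlim.eventually (lt_mem_nhds hw)).exists
    exact ⟨e (Sum.inr n), by simpa using hn⟩
end

section
/- Let n ≥ 1, let h : ℝⁿ → [0,∞) be integrable, let s > 0, and let U, U' ⊆ ℝⁿ be measurable sets such that x + s z ∈ U for every x ∈ U' and every z ∈ Q, where Q is the open unit cube in ℝⁿ centred at the origin. Then ∫_U ( s^{-n} ∫_{Q_s(x)} h(y) dy ) dx ≥ ∫_{U'} h(x) dx, where Q_s(x) := x + sQ. -/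
open MeasureTheory Filter Topology

/-- The open cube in `ℝ^n` of side `s` centred at `x`, with sides parallel to
the coordinate axes. -/
def openCube (n : ℕ) (s : ℝ) (x : Fin n → ℝ) : Set (Fin n → ℝ) :=
  {y | ∀ i, |y i - x i| < s / 2}

theorem openCube_eq_pi (n : ℕ) (s : ℝ) (x : Fin n → ℝ) :
    openCube n s x = Set.pi Set.univ (fun i => Set.Ioo (x i - s / 2) (x i + s / 2)) := by
  ext y
  simp only [openCube, Set.mem_setOf_eq, Set.mem_pi, Set.mem_univ, true_imp_iff, Set.mem_Ioo,
    abs_lt]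
  refine forall_congr' fun i => ?_
  constructor <;> rintro ⟨h1, h2⟩ <;> constructor <;> linarith

theorem openCube_measurable (n : ℕ) (s : ℝ) (x : Fin n → ℝ) :
    MeasurableSet (openCube n s x) := by
  rw [openCube_eq_pi]
  exact MeasurableSet.univ_pi fun i => measurableSet_Ioo

theorem openCube_volume (n : ℕ) (s : ℝ) (x : Fin n → ℝ) :
    volume (openCube n s x) = ENNReal.ofReal s ^ n := by
  rw [openCube_eq_pi, Real.volume_pi_Ioo]
  have : ∀ i, x i + s / 2 - (x i - s / 2) = s := fun i => by ring
  simp [this]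

theorem statement9
    (n : ℕ) (hn : 1 ≤ n)
    (h : (Fin n → ℝ) → ℝ) (hh_nonneg : ∀ x, 0 ≤ h x) (hh_int : Integrable h)
    (s : ℝ) (hs : 0 < s)
    (U U' : Set (Fin n → ℝ)) (hU : MeasurableSet U) (hU' : MeasurableSet U')
    (hUU' : ∀ x ∈ U', ∀ z ∈ openCube n 1 0, x + s • z ∈ U) :
    ∫ x in U', h x ≤ ∫ x in U, (s ^ n)⁻¹ * ∫ y in openCube n s x, h y := by
  classical
  set φ : (Fin n → ℝ) → ℝ := (openCube n s 0).indicator (fun _ => (1 : ℝ)) with hφ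
  have hφ0 : ∀ x, 0 ≤ φ x := fun x => Set.indicator_nonneg (fun _ _ => zero_le_one) x
  have hφi : Integrable φ := by
    rw [hφ, integrable_indicator_iff (openCube_measurable n s 0)]
    refine integrableOn_const ?_ 
    rw [openCube_volume]
    exact ENNReal.pow_ne_top ENNReal.ofReal_ne_top
  have hφint : ∫ x, φ x = s ^ n := by
    rw [hφ, integral_indicator (openCube_measurable n s 0)]
    simp [Measure.real, openCube_volume, hs.le]
  have hK : Integrable (fun p : (Fin n → ℝ) × (Fin n → ℝ) => h p.2 * φ (p.1 - p.2))
      (volume.prod volume) := by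
    simpa using hh_int.convolution_integrand (ContinuousLinearMap.mul ℝ ℝ) hφi
  have hKU : Integrable (fun p : (Fin n → ℝ) × (Fin n → ℝ) => h p.2 * φ (p.1 - p.2))
      ((volume.restrict U).prod volume) := by
    have := hK.restrict (s := U ×ˢ Set.univ)
    rwa [← Measure.prod_restrict, Measure.restrict_univ] at this
  have hin : ∀ x, ∫ y in openCube n s x, h y = ∫ y, h y * φ (x - y) := by
    intro x
    rw [← integral_indicator (openCube_measurable n s x)]
    congr 1
    ext y
    have : x - y ∈ openCube n s 0 ↔ y ∈ openCube n s x := by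
      simp only [openCube, Set.mem_setOf_eq, Pi.sub_apply, Pi.zero_apply, sub_zero]
      exact forall_congr' fun i => by rw [abs_sub_comm]
    by_cases hy : y ∈ openCube n s x
    · simp [hφ, hy, this.2 hy]
    · have h2 : x - y ∉ openCube n s 0 := fun h => hy (this.1 h)
      simp [hφ, hy, h2]
  have hsn : 0 < s ^ n := pow_pos hs n
  rw [integral_const_mul]
  simp_rw [hin]
  rw [integral_integral_swap hKU, ← div_eq_inv_mul, le_div_iff₀ hsn, ← integral_mul_const]
  have hmain : ∀ y ∈ U', h y * s ^ n = ∫ x in U, h y * φ (x - y) := by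
    intro y hy
    rw [integral_const_mul, setIntegral_eq_integral_of_forall_compl_eq_zero,
      integral_sub_right_eq_self φ y, hφint]
    intro x hx
    refine Set.indicator_of_notMem (fun hc => hx ?_) _
    have := hUU' y hy (s⁻¹ • (x - y)) ?_
    · simpa [smul_smul, hs.ne'] using this
    · intro i
      have h1 := hc i
      simp only [Pi.smul_apply, Pi.zero_apply, sub_zero, smul_eq_mul, abs_mul, abs_inv,
        abs_of_pos hs] at h1 ⊢
      rw [← div_eq_inv_mul, div_lt_iff₀ hs]
      linarith
  rw [setIntegral_congr_fun hU' hmain]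
  refine setIntegral_le_integral hKU.integral_prod_right (Eventually.of_forall fun y => ?_)
  exact integral_nonneg fun x => mul_nonneg (hh_nonneg y) (hφ0 _)
end
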